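/- Let n ≥ 2 and let G be a connected finite simple graph on vertex set {1,…,n} with minimum degree d_min ≥ 1, and let λ be the second-smallest eigenvalue of the normalized Laplacian D_G^{−1/2} L_G D_G^{−1/2}. Let η ∈ (0,1/2) satisfy d_min·λ > (18/η)·log n, set δ = sqrt(18·log n/(η·d_min·λ)), and assume η(1+δ) < 1/2. Let H be the random spanning subgraph of G obtained by including each edge of G independently with probability η, and define b_{ij} = −1 for {i,j} ∈ E_H and b_{ij} = +1 for {i,j} ∈ E_G∖E_H. Then with probability at least 1 − 1/n² the following holds: for every real symmetric positive semidefinite n×n matrix X with all diagonal entries equal to 1, Σ_{{i,j}∈E_G} b_{ij} X_{ij} ≤ |E_G| − 2|E_H|, with equality if and only if X = 11ᵀ. In other words, with probability at least 1 − 1/n² the SDP relaxation of the noisy 2-XOR instance attains its maximum |E_G| − 2|E_H| uniquely at the rank-one matrix corresponding to the planted assignment. -/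

import Mathlib

open Finset SimpleGraph Matrix
open scoped Classical

/-- The entry `X_{ij}` of a matrix at an unordered pair `{i,j}` (for symmetric matrices
this is just `X i j`; the symmetrization makes it well defined on `Sym2`). -/
noncomputable def entrySym {n : ℕ} (X : Matrix (Fin n) (Fin n) ℝ) : Sym2 (Fin n) → ℝ :=
  Sym2.lift ⟨fun i j => (X i j + X j i) / 2, fun i j => by ring⟩

/-!
Write `X = Yᵀ Y`. The gap between the planted value and the objective at `X` is half the sum of the
quadratic forms of `L_G - 2 L_H` at the rows of `Y`, so it suffices that this form is positive on
every nonconstant vector, that is, that `L_H` stays below `c L_G` there for some `c < 1/2`. The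
mean of `L_H` is `η L_G`. After whitening by `L_G` its random summands are rank-one matrices, of
norm at most `2 / (d_min λ)` because the spectral gap controls `(x i - x j)²` by the Laplacian form,
and the matrix Chernoff bound applies with `c = η (1 + δ)`.

For rank-one summands the Chernoff bound needs neither Lieb's theorem nor the Golden-Thompson
inequality: the mean of `tr exp` over one random rank-one update is at most its value at a
deterministic rank-one update. This follows by comparing the exponential series term by term, using
Chebyshev's sum inequality on the spectrum.
-/

section WeightedChebyshev

theorem sum_mul_sum_le_sum_mul_sum_of_monovaryOn {ι : Type*} {s : Finset ι} {w f g : ι → ℝ}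
    (hw : ∀ i ∈ s, 0 ≤ w i) (hfg : MonovaryOn f g s) :
    (∑ i ∈ s, w i * f i) * (∑ i ∈ s, w i * g i) ≤
      (∑ i ∈ s, w i) * ∑ i ∈ s, w i * (f i * g i) := by
  have hnonneg : 0 ≤ ∑ i ∈ s, ∑ j ∈ s, w i * w j * ((f j - f i) * (g j - g i)) :=
    sum_nonneg fun i hi => sum_nonneg fun j hj =>
      mul_nonneg (mul_nonneg (hw i hi) (hw j hj)) (hfg.sub_mul_sub_nonneg hi hj)
  have hexpand : ∑ i ∈ s, ∑ j ∈ s, w i * w j * ((f j - f i) * (g j - g i)) =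
      2 * ((∑ i ∈ s, w i) * ∑ i ∈ s, w i * (f i * g i)) -
        2 * ((∑ i ∈ s, w i * f i) * ∑ i ∈ s, w i * g i) := by
    calc ∑ i ∈ s, ∑ j ∈ s, w i * w j * ((f j - f i) * (g j - g i))
        = ∑ i ∈ s, ∑ j ∈ s, (w i * (w j * (f j * g j)) + w i * (f i * g i) * w j -
            w i * f i * (w j * g j) - w i * g i * (w j * f j)) :=
          sum_congr rfl fun i _ => sum_congr rfl fun j _ => by ring
      _ = _ := by
          simp only [sum_sub_distrib, sum_add_distrib, ← sum_mul_sum]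
          ring
  linarith

end WeightedChebyshev

section SpectralCalculus

variable {ι : Type*} [Fintype ι] [DecidableEq ι] {A : Matrix ι ι ℝ}

theorem dotProduct_cfc_mulVec (hA : A.IsHermitian) (f : ℝ → ℝ) (v : ι → ℝ) :
    v ⬝ᵥ (cfc f A *ᵥ v) =
      ∑ i, (hA.eigenvectorBasis i ⬝ᵥ v) ^ 2 * f (hA.eigenvalues i) := by
  have hcoord (i : ι) : (star (hA.eigenvectorUnitary : Matrix ι ι ℝ) *ᵥ v) i =
      hA.eigenvectorBasis i ⬝ᵥ v := by
    simp [mulVec, dotProduct]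
  rw [hA.cfc_eq, Matrix.IsHermitian.cfc, Unitary.conjStarAlgAut_apply, ← mulVec_mulVec,
    ← mulVec_mulVec, dotProduct_mulVec, ← mulVec_transpose,
    ← conjTranspose_eq_transpose_of_trivial, ← star_eq_conjTranspose, dotProduct]
  refine sum_congr rfl fun i _ => ?_
  simp only [mulVec_diagonal, hcoord, Function.comp_apply, RCLike.ofReal_real_eq_id, id_eq]
  ring

theorem trace_cfc (hA : A.IsHermitian) (f : ℝ → ℝ) :
    (cfc f A).trace = ∑ i, f (hA.eigenvalues i) := by
  rw [hA.cfc_eq, Matrix.IsHermitian.cfc, Unitary.conjStarAlgAut_apply, trace_mul_comm,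
    ← mul_assoc, Unitary.coe_star_mul_self, one_mul, trace_diagonal]
  rfl

theorem dotProduct_cfc_mulVec_mono (hA : A.IsHermitian) {f g : ℝ → ℝ}
    (hfg : ∀ t ∈ spectrum ℝ A, f t ≤ g t) (v : ι → ℝ) :
    v ⬝ᵥ (cfc f A *ᵥ v) ≤ v ⬝ᵥ (cfc g A *ᵥ v) := by
  rw [dotProduct_cfc_mulVec hA, dotProduct_cfc_mulVec hA]
  exact sum_le_sum fun i _ => mul_le_mul_of_nonneg_left
    (hfg _ (hA.eigenvalues_mem_spectrum_real i)) (sq_nonneg _)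

theorem dotProduct_cfc_mulVec_mul_le (hA : A.IsHermitian) {f g : ℝ → ℝ}
    (hfg : MonovaryOn f g (spectrum ℝ A)) (v : ι → ℝ) :
    (v ⬝ᵥ (cfc f A *ᵥ v)) * (v ⬝ᵥ (cfc g A *ᵥ v)) ≤
      (v ⬝ᵥ v) * (v ⬝ᵥ (cfc (fun t => f t * g t) A *ᵥ v)) := by
  have hmass : ∑ i, (hA.eigenvectorBasis i ⬝ᵥ v) ^ 2 = v ⬝ᵥ v := by
    simpa [cfc_const_one ℝ A hA.isSelfAdjoint] using (dotProduct_cfc_mulVec hA (fun _ => 1) v).symm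
  simp only [dotProduct_cfc_mulVec hA, ← hmass]
  exact sum_mul_sum_le_sum_mul_sum_of_monovaryOn (fun i _ => sq_nonneg _) fun i _ j _ hij =>
    hfg (hA.eigenvalues_mem_spectrum_real i) (hA.eigenvalues_mem_spectrum_real j) hij

open scoped Matrix.Norms.L2Operator in
theorem trace_exp_eq_sum_exp_eigenvalues (hA : A.IsHermitian) :
    (NormedSpace.exp A).trace = ∑ i, Real.exp (hA.eigenvalues i) := by
  rw [← CFC.real_exp_eq_normedSpace_exp hA.isSelfAdjoint, trace_cfc hA]

theorem trace_exp_nonneg (hA : A.IsHermitian) : 0 ≤ (NormedSpace.exp A).trace := by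
  rw [trace_exp_eq_sum_exp_eigenvalues hA]
  positivity

theorem trace_exp_le_card_mul_exp (hA : A.IsHermitian) {c : ℝ}
    (hc : ∀ v, v ⬝ᵥ (A *ᵥ v) ≤ c * (v ⬝ᵥ v)) :
    (NormedSpace.exp A).trace ≤ Fintype.card ι * Real.exp c := by
  have heigenvalue (i : ι) : hA.eigenvalues i ≤ c := by
    have hunit : hA.eigenvectorBasis i ⬝ᵥ hA.eigenvectorBasis i = 1 := by
      have h := inner_self_eq_one_of_norm_eq_one (𝕜 := ℝ) (hA.eigenvectorBasis.orthonormal.1 i)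
      rwa [EuclideanSpace.inner_eq_star_dotProduct, star_trivial] at h
    have := hc (hA.eigenvectorBasis i)
    rwa [hA.mulVec_eigenvectorBasis, dotProduct_smul, hunit, smul_eq_mul, mul_one, mul_one] at this
  rw [trace_exp_eq_sum_exp_eigenvalues hA]
  calc ∑ i, Real.exp (hA.eigenvalues i) ≤ ∑ _i : ι, Real.exp c := by gcongr; exact heigenvalue _
    _ = Fintype.card ι * Real.exp c := by simp

theorem exp_le_trace_exp (hA : A.IsHermitian) {c : ℝ} {v : ι → ℝ} (hv : v ≠ 0)
    (hc : c * (v ⬝ᵥ v) ≤ v ⬝ᵥ (A *ᵥ v)) : Real.exp c ≤ (NormedSpace.exp A).trace := by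
  obtain ⟨i, hi⟩ : ∃ i, c ≤ hA.eigenvalues i := by
    have hmass := dotProduct_cfc_mulVec hA (fun _ => 1) v
    have hform := dotProduct_cfc_mulVec hA id v
    rw [cfc_const_one ℝ A hA.isSelfAdjoint, one_mulVec] at hmass
    rw [cfc_id ℝ A hA.isSelfAdjoint] at hform
    rw [hmass, hform, mul_sum] at hc
    obtain ⟨i, -, hi⟩ : ∃ i ∈ univ, 0 < (hA.eigenvectorBasis i ⬝ᵥ v) ^ 2 * 1 :=
      exists_lt_of_sum_lt <| by
        rw [sum_const_zero, ← hmass]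
        exact dotProduct_star_self_pos_iff.2 hv
    by_contra! hlt
    refine hc.not_gt (sum_lt_sum (fun j _ => ?_) ⟨i, mem_univ i, ?_⟩)
    · have := mul_le_mul_of_nonneg_left (hlt j).le (sq_nonneg (hA.eigenvectorBasis j ⬝ᵥ v))
      simp only [id_eq]; linarith
    · have := mul_lt_mul_of_pos_left (hlt i) (by simpa using hi)
      simp only [id_eq]; linarith
  rw [trace_exp_eq_sum_exp_eigenvalues hA]
  exact (Real.exp_le_exp.2 hi).trans
    (single_le_sum (f := fun i => Real.exp (hA.eigenvalues i)) (fun i _ => (Real.exp_pos _).le)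
      (mem_univ i))

end SpectralCalculus

section RankOneUpdate

variable {ι : Type*} [Fintype ι]

theorem dotProduct_mul_vecMulVec_mul_mulVec (M N : Matrix ι ι ℝ) (v : ι → ℝ) :
    v ⬝ᵥ ((M * vecMulVec v v * N) *ᵥ v) = (v ⬝ᵥ (M *ᵥ v)) * (v ⬝ᵥ (N *ᵥ v)) := by
  rw [← mulVec_mulVec, ← mulVec_mulVec, vecMulVec_mulVec, op_smul_eq_smul, mulVec_smul,
    dotProduct_smul, smul_eq_mul, mul_comm]

theorem trace_mul_vecMulVec_mul (M N : Matrix ι ι ℝ) (v : ι → ℝ) :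
    (M * vecMulVec v v * N).trace = v ⬝ᵥ ((N * M) *ᵥ v) := by
  rw [trace_mul_comm, ← mul_assoc, mul_vecMulVec, trace_vecMulVec, dotProduct_comm]

variable [DecidableEq ι] {A : Matrix ι ι ℝ} {v : ι → ℝ} {h R p : ℝ}

theorem dotProduct_pow_mul_pow_succ_mulVec (A : Matrix ι ι ℝ) (v : ι → ℝ) (h : ℝ) (m j : ℕ) :
    v ⬝ᵥ ((A ^ m * (A + h • vecMulVec v v) ^ (j + 1)) *ᵥ v) =
      v ⬝ᵥ ((A ^ (m + 1) * (A + h • vecMulVec v v) ^ j) *ᵥ v) +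
        h * ((v ⬝ᵥ (A ^ m *ᵥ v)) * (v ⬝ᵥ ((A + h • vecMulVec v v) ^ j *ᵥ v))) := by
  rw [← dotProduct_mul_vecMulVec_mul_mulVec, ← smul_eq_mul h, ← dotProduct_smul, ← smul_mulVec,
    ← dotProduct_add, ← add_mulVec]
  congr 2
  rw [pow_succ', pow_succ, add_mul, mul_add, smul_mul_assoc, mul_smul_comm, ← mul_assoc,
    ← mul_assoc]

theorem trace_pow_add_smul_vecMulVec_sub (A : Matrix ι ι ℝ) (v : ι → ℝ) (h : ℝ) (k : ℕ) :
    ((A + h • vecMulVec v v) ^ k).trace - (A ^ k).trace =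
      h * ∑ i ∈ range k, v ⬝ᵥ ((A ^ i * (A + h • vecMulVec v v) ^ (k - 1 - i)) *ᵥ v) := by
  set B := A + h • vecMulVec v v with hB
  have hstep : ∀ i ∈ range k, h * v ⬝ᵥ ((A ^ i * B ^ (k - 1 - i)) *ᵥ v) =
      (B ^ (k - i) * A ^ i).trace - (B ^ (k - (i + 1)) * A ^ (i + 1)).trace := by
    intro i hi
    obtain ⟨r, rfl⟩ := Nat.exists_eq_add_of_lt (mem_range.1 hi)
    rw [show i + r + 1 - 1 - i = r by omega, show i + r + 1 - i = r + 1 by omega,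
      show i + r + 1 - (i + 1) = r by omega, ← trace_mul_vecMulVec_mul, ← smul_eq_mul,
      ← trace_smul, ← trace_sub]
    congr 1
    rw [pow_succ B, pow_succ' A, ← mul_assoc, ← sub_mul, ← mul_sub, hB, add_sub_cancel_left,
      mul_smul_comm, smul_mul_assoc]
  rw [mul_sum, sum_congr rfl hstep, sum_range_sub' fun i => (B ^ (k - i) * A ^ i).trace]
  simp

theorem dotProduct_pow_mulVec_nonneg (hA : A.PosSemidef) (v : ι → ℝ) (k : ℕ) :
    0 ≤ v ⬝ᵥ (A ^ k *ᵥ v) := by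
  simpa using (hA.pow k).dotProduct_mulVec_nonneg v

theorem dotProduct_pow_mulVec_le_add_smul_vecMulVec (hA : A.PosSemidef) (hh : 0 ≤ h) (j m : ℕ) :
    v ⬝ᵥ (A ^ (m + j) *ᵥ v) ≤ v ⬝ᵥ ((A ^ m * (A + h • vecMulVec v v) ^ j) *ᵥ v) := by
  induction j generalizing m with
  | zero => simp
  | succ j ih =>
    have hprod : 0 ≤ (v ⬝ᵥ (A ^ m *ᵥ v)) * (v ⬝ᵥ ((A + h • vecMulVec v v) ^ j *ᵥ v)) :=
      mul_nonneg (dotProduct_pow_mulVec_nonneg hA v m)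
        ((dotProduct_pow_mulVec_nonneg hA v (0 + j)).trans (by simpa using ih 0))
    rw [dotProduct_pow_mul_pow_succ_mulVec, show m + (j + 1) = m + 1 + j by ring]
    exact (ih (m + 1)).trans (le_add_of_nonneg_right (mul_nonneg hh hprod))

theorem cfc_pow_mul_add_pow (hA : A.IsHermitian) (c : ℝ) (m j : ℕ) :
    cfc (fun t => t ^ m * (t + c) ^ j) A = A ^ m * (A + c • 1) ^ j := by
  have hA' := hA.isSelfAdjoint
  rw [cfc_mul (fun t => t ^ m) (fun t => (t + c) ^ j) A, cfc_pow_id A m,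
    cfc_pow (fun t => t + c) j A, cfc_add_const c (fun t => t) A, cfc_id' ℝ A,
    Algebra.algebraMap_eq_smul_one]

theorem dotProduct_pow_mulVec_mul_le (hA : A.PosSemidef) {c : ℝ} (hc : 0 ≤ c) (v : ι → ℝ)
    (m j : ℕ) :
    (v ⬝ᵥ (A ^ m *ᵥ v)) * (v ⬝ᵥ ((A + c • 1) ^ j *ᵥ v)) ≤
      (v ⬝ᵥ v) * (v ⬝ᵥ ((A ^ m * (A + c • 1) ^ j) *ᵥ v)) := by
  have hspec := (posSemidef_iff_isHermitian_and_spectrum_nonneg.1 hA).2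
  have hmono : MonovaryOn (fun t => t ^ m) (fun t => (t + c) ^ j) (spectrum ℝ A) :=
    MonotoneOn.monovaryOn (fun s hs t _ hst => pow_le_pow_left₀ (hspec hs) hst m)
      fun s hs t _ hst =>
        pow_le_pow_left₀ (add_nonneg (hspec hs) hc) (add_le_add_left hst c) j
  have hshift : cfc (fun t => (t + c) ^ j) A = (A + c • 1) ^ j := by
    simpa using cfc_pow_mul_add_pow hA.1 c 0 j
  rw [← cfc_pow_mul_add_pow hA.1, ← cfc_pow_id (R := ℝ) A m hA.1.isSelfAdjoint,
    ← hshift]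
  exact dotProduct_cfc_mulVec_mul_le hA.1 hmono v

theorem dotProduct_add_smul_vecMulVec_pow_le (hA : A.PosSemidef) (hv : v ⬝ᵥ v ≤ R)
    (hh : 0 ≤ h) (j m : ℕ) :
    v ⬝ᵥ ((A ^ m * (A + h • vecMulVec v v) ^ j) *ᵥ v) ≤
      v ⬝ᵥ ((A ^ m * (A + (h * R) • 1) ^ j) *ᵥ v) := by
  induction j generalizing m with
  | zero => simp
  | succ j ih =>
    have hR : 0 ≤ R := (dotProduct_star_self_nonneg v).trans hv
    have hprod : (v ⬝ᵥ (A ^ m *ᵥ v)) * (v ⬝ᵥ ((A + h • vecMulVec v v) ^ j *ᵥ v)) ≤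
        R * (v ⬝ᵥ ((A ^ m * (A + (h * R) • 1) ^ j) *ᵥ v)) :=
      calc _ ≤ (v ⬝ᵥ (A ^ m *ᵥ v)) * (v ⬝ᵥ ((A + (h * R) • 1) ^ j *ᵥ v)) :=
            mul_le_mul_of_nonneg_left (by simpa using ih 0) (dotProduct_pow_mulVec_nonneg hA v m)
        _ ≤ (v ⬝ᵥ v) * (v ⬝ᵥ ((A ^ m * (A + (h * R) • 1) ^ j) *ᵥ v)) :=
            dotProduct_pow_mulVec_mul_le hA (mul_nonneg hh hR) v m j
        _ ≤ _ := mul_le_mul_of_nonneg_right hv <|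
            (dotProduct_pow_mulVec_nonneg hA v (m + j)).trans <|
              (dotProduct_pow_mulVec_le_add_smul_vecMulVec hA hh j m).trans (ih m)
    have hexpand : A ^ m * (A + (h * R) • 1) ^ (j + 1) =
        A ^ (m + 1) * (A + (h * R) • 1) ^ j + (h * R) • (A ^ m * (A + (h * R) • 1) ^ j) := by
      rw [pow_succ' (A + _), pow_succ A, add_mul, mul_add, smul_one_mul, mul_smul_comm, mul_assoc]
    rw [dotProduct_pow_mul_pow_succ_mulVec, hexpand, add_mulVec, dotProduct_add, smul_mulVec,
      dotProduct_smul, smul_eq_mul, mul_assoc h]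
    exact add_le_add (ih (m + 1)) (mul_le_mul_of_nonneg_left hprod hh)

theorem mul_trace_pow_add_smul_vecMulVec_sub_le (hA : A.PosSemidef) (hv : v ⬝ᵥ v ≤ R)
    (hh : 0 ≤ h) (k : ℕ) :
    R * (((A + h • vecMulVec v v) ^ k).trace - (A ^ k).trace) ≤
      v ⬝ᵥ ((A + (h * R) • 1) ^ k *ᵥ v) - v ⬝ᵥ (A ^ k *ᵥ v) := by
  have hR : 0 ≤ R := (dotProduct_star_self_nonneg v).trans hv
  have hgeom : (h * R) • ∑ i ∈ range k, A ^ i * (A + (h * R) • 1) ^ (k - 1 - i) =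
      (A + (h * R) • 1) ^ k - A ^ k := by
    have hcomm : Commute A (A + (h * R) • 1) :=
      (Commute.refl A).add_right ((Commute.one_right A).smul_right _)
    rw [← hcomm.mul_neg_geom_sum₂, add_sub_cancel_left, smul_one_mul]
  calc _ = h * R * ∑ i ∈ range k,
        v ⬝ᵥ ((A ^ i * (A + h • vecMulVec v v) ^ (k - 1 - i)) *ᵥ v) := by
        rw [trace_pow_add_smul_vecMulVec_sub]; ring
    _ ≤ h * R * ∑ i ∈ range k, v ⬝ᵥ ((A ^ i * (A + (h * R) • 1) ^ (k - 1 - i)) *ᵥ v) :=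
        mul_le_mul_of_nonneg_left (sum_le_sum fun i _ =>
          dotProduct_add_smul_vecMulVec_pow_le hA hv hh (k - 1 - i) i) (mul_nonneg hh hR)
    _ = v ⬝ᵥ (((A + (h * R) • 1) ^ k - A ^ k) *ᵥ v) := by
        rw [← hgeom, smul_mulVec, dotProduct_smul, sum_mulVec, dotProduct_sum, smul_eq_mul]
    _ = _ := by rw [sub_mulVec, dotProduct_sub]

theorem trace_pow_add_le_trace_add_smul_vecMulVec_pow (hA : A.PosSemidef) (hh : 0 ≤ h) (k : ℕ) :
    (A ^ k).trace + h * (k * (v ⬝ᵥ (A ^ (k - 1) *ᵥ v))) ≤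
      ((A + h • vecMulVec v v) ^ k).trace := by
  rw [← le_sub_iff_add_le', trace_pow_add_smul_vecMulVec_sub]
  refine mul_le_mul_of_nonneg_left ?_ hh
  calc (k : ℝ) * (v ⬝ᵥ (A ^ (k - 1) *ᵥ v)) = ∑ _i ∈ range k, v ⬝ᵥ (A ^ (k - 1) *ᵥ v) := by simp
    _ ≤ _ := sum_le_sum fun i hi => by
        have := dotProduct_pow_mulVec_le_add_smul_vecMulVec (v := v) hA hh (k - 1 - i) i
        rwa [Nat.add_sub_cancel' (Nat.le_sub_one_of_lt (mem_range.1 hi))] at this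

open scoped Matrix.Norms.L2Operator in
theorem hasSum_exp_matrix (A : Matrix ι ι ℝ) :
    HasSum (fun k : ℕ => (k.factorial : ℝ)⁻¹ • A ^ k) (NormedSpace.exp A) :=
  NormedSpace.exp_series_hasSum_exp' A

theorem hasSum_trace_exp (A : Matrix ι ι ℝ) :
    HasSum (fun k : ℕ => (k.factorial : ℝ)⁻¹ * (A ^ k).trace) (NormedSpace.exp A).trace := by
  simpa using (hasSum_exp_matrix A).mapL (traceLinearMap ι ℝ ℝ).toContinuousLinearMap

theorem hasSum_dotProduct_exp_mulVec (A : Matrix ι ι ℝ) (v : ι → ℝ) :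
    HasSum (fun k : ℕ => (k.factorial : ℝ)⁻¹ * (v ⬝ᵥ (A ^ k *ᵥ v)))
      (v ⬝ᵥ (NormedSpace.exp A *ᵥ v)) := by
  let form : Matrix ι ι ℝ →+ ℝ := AddMonoidHom.mk' (fun M => v ⬝ᵥ (M *ᵥ v))
    fun M N => by rw [add_mulVec, dotProduct_add]
  have hform : Continuous form :=
    continuous_const.dotProduct (continuous_id.matrix_mulVec continuous_const)
  simpa [form, Function.comp_def, smul_mulVec] using (hasSum_exp_matrix A).map form hform

open scoped Matrix.Norms.L2Operator in
theorem exp_add_smul_one (A : Matrix ι ι ℝ) (c : ℝ) :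
    NormedSpace.exp (A + c • 1) = Real.exp c • NormedSpace.exp A := by
  have hscalar : NormedSpace.exp (c • (1 : Matrix ι ι ℝ)) = Real.exp c • 1 := by
    rw [← Algebra.algebraMap_eq_smul_one, ← NormedSpace.algebraMap_exp_comm,
      Algebra.algebraMap_eq_smul_one, Real.exp_eq_exp_ℝ]
  rw [Matrix.exp_add_of_commute _ _ ((Commute.one_right A).smul_right c), hscalar, mul_smul_comm,
    mul_one]

theorem mul_trace_exp_add_smul_vecMulVec_sub_le (hA : A.PosSemidef) (hv : v ⬝ᵥ v ≤ R)
    (hh : 0 ≤ h) :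
    R * ((NormedSpace.exp (A + h • vecMulVec v v)).trace - (NormedSpace.exp A).trace) ≤
      (Real.exp (h * R) - 1) * (v ⬝ᵥ (NormedSpace.exp A *ᵥ v)) := by
  have hlhs := ((hasSum_trace_exp (A + h • vecMulVec v v)).sub (hasSum_trace_exp A)).mul_left R
  have hrhs := (hasSum_dotProduct_exp_mulVec (A + (h * R) • 1) v).sub
    (hasSum_dotProduct_exp_mulVec A v)
  rw [exp_add_smul_one, smul_mulVec, dotProduct_smul, smul_eq_mul, ← sub_one_mul] at hrhs
  refine hasSum_le (fun k => ?_) hlhs hrhs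
  rw [← mul_sub, ← mul_sub, mul_left_comm]
  exact mul_le_mul_of_nonneg_left (mul_trace_pow_add_smul_vecMulVec_sub_le hA hv hh k)
    (by positivity)

theorem trace_exp_add_le_trace_exp_add_smul_vecMulVec (hA : A.PosSemidef) (hh : 0 ≤ h) :
    (NormedSpace.exp A).trace + h * (v ⬝ᵥ (NormedSpace.exp A *ᵥ v)) ≤
      (NormedSpace.exp (A + h • vecMulVec v v)).trace := by
  have hshifted : HasSum
      (fun k : ℕ => (k.factorial : ℝ)⁻¹ * (k * (v ⬝ᵥ (A ^ (k - 1) *ᵥ v))))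
      (v ⬝ᵥ (NormedSpace.exp A *ᵥ v)) := by
    have hsucc (k : ℕ) : ((k + 1).factorial : ℝ)⁻¹ * ((k + 1 : ℕ) * (v ⬝ᵥ (A ^ k *ᵥ v))) =
        (k.factorial : ℝ)⁻¹ * (v ⬝ᵥ (A ^ k *ᵥ v)) := by
      rw [Nat.factorial_succ]
      push_cast
      field_simp
    rw [← hasSum_nat_add_iff' 1]
    simpa [← hsucc] using hasSum_dotProduct_exp_mulVec A v
  refine hasSum_le (fun k => ?_) ((hasSum_trace_exp A).add (hshifted.mul_left h))
    (hasSum_trace_exp _)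
  rw [mul_left_comm h, ← mul_add]
  exact mul_le_mul_of_nonneg_left (trace_pow_add_le_trace_add_smul_vecMulVec_pow hA hh k)
    (by positivity)

theorem bernoulli_trace_exp_add_smul_vecMulVec_le (hA : A.PosSemidef) (hv : v ⬝ᵥ v ≤ R)
    (hR : 0 < R) (hh : 0 ≤ h) (hp : 0 ≤ p) :
    (1 - p) * (NormedSpace.exp A).trace +
        p * (NormedSpace.exp (A + h • vecMulVec v v)).trace ≤
      (NormedSpace.exp (A + (p * (Real.exp (h * R) - 1) / R) • vecMulVec v v)).trace := by
  have hexp : 0 ≤ Real.exp (h * R) - 1 := sub_nonneg.2 (Real.one_le_exp (mul_nonneg hh hR.le))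
  calc _ = (NormedSpace.exp A).trace + p / R * (R *
        ((NormedSpace.exp (A + h • vecMulVec v v)).trace - (NormedSpace.exp A).trace)) := by
        field_simp; ring
    _ ≤ (NormedSpace.exp A).trace +
        p / R * ((Real.exp (h * R) - 1) * (v ⬝ᵥ (NormedSpace.exp A *ᵥ v))) := by
        grw [mul_trace_exp_add_smul_vecMulVec_sub_le hA hv hh]
    _ = (NormedSpace.exp A).trace +
        p * (Real.exp (h * R) - 1) / R * (v ⬝ᵥ (NormedSpace.exp A *ᵥ v)) := by ring
    _ ≤ _ := trace_exp_add_le_trace_exp_add_smul_vecMulVec hA (by positivity)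

end RankOneUpdate

section BernoulliProduct

theorem sum_powerset_le_of_bernoulli_step {E M : Type*} [DecidableEq E] [AddCommMonoid M]
    {C : M → Prop} {Φ : M → ℝ} {a b : E → M} {p : ℝ} (hp : 0 ≤ p) (hp1 : p ≤ 1)
    (ha : ∀ x e, C x → C (x + a e)) (hb : ∀ x e, C x → C (x + b e))
    (hstep : ∀ x e, C x → (1 - p) * Φ x + p * Φ (x + a e) ≤ Φ (x + b e))
    (s : Finset E) {x : M} (hx : C x) :
    ∑ t ∈ s.powerset, p ^ #t * (1 - p) ^ #(s \ t) * Φ (x + ∑ e ∈ t, a e) ≤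
      Φ (x + ∑ e ∈ s, b e) := by
  have hsum {x : M} (hx : C x) (t : Finset E) : C (x + ∑ e ∈ t, a e) := by
    induction t using Finset.induction_on with
    | empty => simpa using hx
    | insert e t he ih =>
      rw [sum_insert he, add_comm (a e), ← add_assoc]
      exact ha _ e ih
  induction s using Finset.induction_on generalizing x with
  | empty => simp
  | insert e s he ih =>
    rw [sum_powerset_insert he, sum_insert he, ← add_assoc, ← sum_add_distrib]
    refine le_trans (sum_le_sum fun t ht => ?_) (ih (hb x e hx))
    have het : e ∉ t := fun h => he (mem_powerset.1 ht h)
    have hweight : 0 ≤ p ^ #t * (1 - p) ^ #(s \ t) :=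
      mul_nonneg (pow_nonneg hp _) (pow_nonneg (sub_nonneg.2 hp1) _)
    calc _ = p ^ #t * (1 - p) ^ #(s \ t) * ((1 - p) * Φ (x + ∑ i ∈ t, a i) +
          p * Φ (x + ∑ i ∈ t, a i + a e)) := by
          rw [insert_sdiff_of_notMem _ het, insert_sdiff_insert, sdiff_insert_of_notMem he,
            card_insert_of_notMem het, card_insert_of_notMem (by simp [he]), sum_insert het,
            add_comm (a e), ← add_assoc]
          ring
      _ ≤ p ^ #t * (1 - p) ^ #(s \ t) * Φ (x + ∑ i ∈ t, a i + b e) :=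
          mul_le_mul_of_nonneg_left (hstep _ e (hsum hx t)) hweight
      _ = _ := by rw [add_right_comm]

variable {E : Type*} [Fintype E] {p : ℝ}

/-- The probability of the outcome `f` when every coordinate is independently `true` with
probability `p`. -/
noncomputable def bernoulliWeight (p : ℝ) (f : E → Bool) : ℝ :=
  ∏ e, if f e then p else 1 - p

theorem bernoulliWeight_nonneg (hp : 0 ≤ p) (hp1 : p ≤ 1) (f : E → Bool) :
    0 ≤ bernoulliWeight p f :=
  prod_nonneg fun e _ => by split_ifs <;> linarith

variable [DecidableEq E]

/-- The probability of the event `P` under the product Bernoulli distribution, as a finite sum. -/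
noncomputable def bernoulliProb (p : ℝ) (P : (E → Bool) → Prop) : ℝ :=
  ∑ f, if P f then bernoulliWeight p f else 0

theorem sum_bernoulliWeight (p : ℝ) : ∑ f : E → Bool, bernoulliWeight p f = 1 := by
  simp only [bernoulliWeight]
  rw [← Fintype.prod_sum (fun (_ : E) (b : Bool) => if b then p else 1 - p)]
  simp

theorem bernoulliProb_mono (hp : 0 ≤ p) (hp1 : p ≤ 1) {P Q : (E → Bool) → Prop}
    (hPQ : ∀ f, P f → Q f) : bernoulliProb p P ≤ bernoulliProb p Q := by
  refine sum_le_sum fun f _ => ?_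
  have := bernoulliWeight_nonneg hp hp1 f
  split_ifs with hP hQ hQ
  exacts [le_rfl, absurd (hPQ f hP) hQ, this, le_rfl]

theorem one_sub_bernoulliProb_le (hp : 0 ≤ p) (hp1 : p ≤ 1) {P Q : (E → Bool) → Prop}
    (hPQ : ∀ f, ¬ P f → Q f) : 1 - bernoulliProb p P ≤ bernoulliProb p Q := by
  rw [sub_le_iff_le_add, ← sum_bernoulliWeight (E := E) p, bernoulliProb, bernoulliProb,
    ← sum_add_distrib]
  refine sum_le_sum fun f _ => ?_
  have := bernoulliWeight_nonneg hp hp1 f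
  by_cases hP : P f
  · split_ifs <;> linarith
  · simp [hP, hPQ f hP]

theorem mul_bernoulliProb_le_sum (hp : 0 ≤ p) (hp1 : p ≤ 1) {P : (E → Bool) → Prop}
    {Y : (E → Bool) → ℝ} {t : ℝ} (hY : ∀ f, 0 ≤ Y f) (hP : ∀ f, P f → t ≤ Y f) :
    t * bernoulliProb p P ≤ ∑ f, bernoulliWeight p f * Y f := by
  rw [bernoulliProb, mul_sum]
  refine sum_le_sum fun f _ => ?_
  have hweight := bernoulliWeight_nonneg hp hp1 f
  split_ifs with hf
  · rw [mul_comm]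
    exact mul_le_mul_of_nonneg_left (hP f hf) hweight
  · simpa using mul_nonneg hweight (hY f)

theorem sum_bernoulliWeight_mul (p : ℝ) (F : Finset E → ℝ) :
    ∑ f : E → Bool, bernoulliWeight p f * F (univ.filter (f ·)) =
      ∑ t : Finset E, p ^ #t * (1 - p) ^ #(univ \ t) * F t := by
  refine sum_nbij' (fun f => univ.filter (f ·)) (fun t e => decide (e ∈ t)) (by simp) (by simp)
    (by simp) (by simp) fun f _ => ?_
  simp only [bernoulliWeight, prod_ite, prod_const, filter_not]

theorem sum_bernoulliWeight_mul_le_of_step {M : Type*} [AddCommMonoid M] {C : M → Prop}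
    {Φ : M → ℝ} {a b : E → M} (hp : 0 ≤ p) (hp1 : p ≤ 1)
    (ha : ∀ x e, C x → C (x + a e)) (hb : ∀ x e, C x → C (x + b e))
    (hstep : ∀ x e, C x → (1 - p) * Φ x + p * Φ (x + a e) ≤ Φ (x + b e)) {x : M} (hx : C x) :
    ∑ f : E → Bool, bernoulliWeight p f * Φ (x + ∑ e with f e = true, a e) ≤ Φ (x + ∑ e, b e) := by
  rw [sum_bernoulliWeight_mul p fun t => Φ (x + ∑ e ∈ t, a e), ← powerset_univ]
  exact sum_powerset_le_of_bernoulli_step hp hp1 ha hb hstep univ hx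

end BernoulliProduct

section Whitening

variable {ι : Type*} [Fintype ι] [DecidableEq ι] {A : Matrix ι ι ℝ}

theorem continuousOn_spectrum_real (A : Matrix ι ι ℝ) (f : ℝ → ℝ) :
    ContinuousOn f (spectrum ℝ A) :=
  Matrix.finite_real_spectrum.continuousOn f

theorem dotProduct_cfc_mulVec_comm (f : ℝ → ℝ) (v w : ι → ℝ) :
    (cfc f A *ᵥ v) ⬝ᵥ w = v ⬝ᵥ (cfc f A *ᵥ w) := by
  have hsymm : (cfc f A)ᵀ = cfc f A := by
    simpa [IsSelfAdjoint, star_eq_conjTranspose] using cfc_predicate f A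
  rw [dotProduct_mulVec, ← mulVec_transpose, hsymm]

theorem cfc_mulVec_dotProduct_self (f : ℝ → ℝ) (v : ι → ℝ) :
    (cfc f A *ᵥ v) ⬝ᵥ (cfc f A *ᵥ v) = v ⬝ᵥ (cfc (fun t => f t * f t) A *ᵥ v) := by
  have hf := continuousOn_spectrum_real A f
  rw [dotProduct_cfc_mulVec_comm, mulVec_mulVec, cfc_mul f f A]

theorem cfc_mulVec_dotProduct_mulVec (hA : A.IsHermitian) (f : ℝ → ℝ) (v : ι → ℝ) :
    (cfc f A *ᵥ v) ⬝ᵥ (A *ᵥ (cfc f A *ᵥ v)) = v ⬝ᵥ (cfc (fun t => f t * (t * f t)) A *ᵥ v) := by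
  have hf := continuousOn_spectrum_real A
  rw [dotProduct_cfc_mulVec_comm, mulVec_mulVec, mulVec_mulVec, mul_assoc,
    cfc_mul f (fun t => t * f t) A (hf _) (hf _), cfc_mul (fun t => t) f A (hf _) (hf _),
    cfc_id' ℝ A hA.isSelfAdjoint]

theorem exists_whitening {ι : Type*} [Fintype ι] {A : Matrix ι ι ℝ} (hA : A.PosSemidef) :
    ∃ W S : Matrix ι ι ℝ,
      Wᵀ = W ∧ (∀ z, (W *ᵥ z) ⬝ᵥ (A *ᵥ (W *ᵥ z)) ≤ z ⬝ᵥ z) ∧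
      (∀ x, (S *ᵥ x) ⬝ᵥ (S *ᵥ x) = x ⬝ᵥ (A *ᵥ x)) ∧
      ∀ x, (x - W *ᵥ (S *ᵥ x)) ⬝ᵥ (A *ᵥ (x - W *ᵥ (S *ᵥ x))) = 0 := by
  have hA' := hA.1.isSelfAdjoint
  have hf := continuousOn_spectrum_real A
  have hnonneg {t : ℝ} (ht : t ∈ spectrum ℝ A) : 0 ≤ t :=
    (posSemidef_iff_isHermitian_and_spectrum_nonneg.1 hA).2 ht
  refine ⟨cfc (fun t => (√t)⁻¹) A, cfc Real.sqrt A, ?_, fun z => ?_, fun x => ?_, fun x => ?_⟩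
  · simpa [IsSelfAdjoint, star_eq_conjTranspose] using cfc_predicate (fun t => (√t)⁻¹) A
  · rw [cfc_mulVec_dotProduct_mulVec hA.1]
    simpa [cfc_const_one ℝ A hA'] using
      dotProduct_cfc_mulVec_mono hA.1 (g := fun _ => 1) (fun t ht => by
        rcases (hnonneg ht).eq_or_lt with rfl | hpos
        · simp
        · field_simp
          simp [hpos.le]) z
  · rw [cfc_mulVec_dotProduct_self, cfc_congr fun t ht => Real.mul_self_sqrt (hnonneg ht),
      cfc_id' ℝ A hA']
  · have hproj : x - cfc (fun t => (√t)⁻¹) A *ᵥ (cfc Real.sqrt A *ᵥ x) =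
        cfc (fun t => 1 - (√t)⁻¹ * √t) A *ᵥ x := by
      rw [cfc_sub (fun _ => 1) (fun t => (√t)⁻¹ * √t) A (hf _) (hf _),
        cfc_mul (fun t => (√t)⁻¹) Real.sqrt A (hf _) (hf _), cfc_const_one ℝ A hA', sub_mulVec,
        one_mulVec, mulVec_mulVec]
    rw [hproj, cfc_mulVec_dotProduct_mulVec hA.1]
    have hzero : cfc (fun t => (1 - (√t)⁻¹ * √t) * (t * (1 - (√t)⁻¹ * √t))) A = 0 := by
      rw [cfc_congr (g := fun _ => 0), cfc_const_zero]
      intro t ht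
      rcases (hnonneg ht).eq_or_lt with rfl | hpos
      · simp
      · simp [(Real.sqrt_pos.2 hpos).ne']
    simp [hzero]

end Whitening

section MatrixChernoff

variable {ι E : Type*} {v : E → ι → ℝ} {R p δ : ℝ}

theorem posSemidef_smul_vecMulVec_self [Finite ι] {h : ℝ} (hh : 0 ≤ h) (v : ι → ℝ) :
    (h • vecMulVec v v).PosSemidef := by
  simpa using (posSemidef_vecMulVec_self_star v).smul hh

variable [Fintype ι]

theorem dotProduct_sum_smul_vecMulVec_mulVec (v : E → ι → ℝ) (h : ℝ) (s : Finset E)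
    (z : ι → ℝ) :
    z ⬝ᵥ ((∑ e ∈ s, h • vecMulVec (v e) (v e)) *ᵥ z) = h * ∑ e ∈ s, (v e ⬝ᵥ z) ^ 2 := by
  rw [sum_mulVec, dotProduct_sum, mul_sum]
  refine sum_congr rfl fun e _ => ?_
  rw [smul_mulVec, vecMulVec_mulVec, op_smul_eq_smul, dotProduct_smul, dotProduct_smul,
    smul_eq_mul, smul_eq_mul, dotProduct_comm z, sq]

theorem sub_one_add_mul_log_le_neg_sq_div_three (h0 : 0 ≤ δ) (h1 : δ ≤ 1) :
    δ - (1 + δ) * Real.log (1 + δ) ≤ -(δ ^ 2 / 3) :=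
  calc δ - (1 + δ) * Real.log (1 + δ) ≤ δ - (1 + δ) * (2 * δ / (δ + 2)) := by
        gcongr
        exact Real.le_log_one_add_of_nonneg h0
    _ = -(δ ^ 2 / (δ + 2)) := by field_simp; ring
    _ ≤ -(δ ^ 2 / 3) := by gcongr; linarith

variable [Fintype E] [DecidableEq E]

theorem sum_bernoulliWeight_mul_trace_exp_le [DecidableEq ι] (hp : 0 ≤ p) (hp1 : p ≤ 1)
    (hR : 0 < R) (hv : ∀ e, v e ⬝ᵥ v e ≤ R) (hsum : ∀ z, ∑ e, (v e ⬝ᵥ z) ^ 2 ≤ z ⬝ᵥ z)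
    {h : ℝ} (hh : 0 ≤ h) :
    ∑ f : E → Bool, bernoulliWeight p f *
        (NormedSpace.exp (∑ e with f e = true, h • vecMulVec (v e) (v e))).trace ≤
      Fintype.card ι * Real.exp (p * (Real.exp (h * R) - 1) / R) := by
  have hκ : 0 ≤ p * (Real.exp (h * R) - 1) / R :=
    div_nonneg (mul_nonneg hp (sub_nonneg.2 (Real.one_le_exp (mul_nonneg hh hR.le)))) hR.le
  set κ := p * (Real.exp (h * R) - 1) / R
  have hdomination := sum_bernoulliWeight_mul_le_of_step (C := PosSemidef)
    (Φ := fun A => (NormedSpace.exp A).trace) (a := fun e => h • vecMulVec (v e) (v e))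
    (b := fun e => κ • vecMulVec (v e) (v e)) hp hp1
    (fun A e hA => hA.add (posSemidef_smul_vecMulVec_self hh (v e)))
    (fun A e hA => hA.add (posSemidef_smul_vecMulVec_self hκ (v e)))
    (fun A e hA => bernoulli_trace_exp_add_smul_vecMulVec_le hA (hv e) hR hh hp)
    PosSemidef.zero
  simp only [zero_add] at hdomination
  refine hdomination.trans (trace_exp_le_card_mul_exp ?_ fun z => ?_)
  · exact (posSemidef_sum _ fun e _ => posSemidef_smul_vecMulVec_self hκ (v e)).1
  · rw [dotProduct_sum_smul_vecMulVec_mulVec]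
    exact mul_le_mul_of_nonneg_left (hsum z) hκ

theorem matrix_chernoff_rankOne (hp : 0 ≤ p) (hp1 : p ≤ 1) (hR : 0 < R)
    (hv : ∀ e, v e ⬝ᵥ v e ≤ R) (hsum : ∀ z, ∑ e, (v e ⬝ᵥ z) ^ 2 ≤ z ⬝ᵥ z)
    (h0 : 0 ≤ δ) (h1 : δ ≤ 1) :
    bernoulliProb p (fun f => ∃ z ≠ 0,
        p * (1 + δ) * (z ⬝ᵥ z) ≤ ∑ e with f e = true, (v e ⬝ᵥ z) ^ 2) ≤
      Fintype.card ι * Real.exp (-(p * δ ^ 2 / (3 * R))) := by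
  have hlog : 0 ≤ Real.log (1 + δ) / R := div_nonneg (Real.log_nonneg (by linarith)) hR.le
  set h := Real.log (1 + δ) / R with hh
  have hexp : Real.exp (h * R) = 1 + δ := by
    rw [hh, div_mul_cancel₀ _ hR.ne', Real.exp_log (by linarith)]
  have hpsd (f : E → Bool) : (∑ e with f e = true, h • vecMulVec (v e) (v e)).PosSemidef :=
    posSemidef_sum _ fun e _ => posSemidef_smul_vecMulVec_self hlog (v e)
  have hmarkov := mul_bernoulliProb_le_sum hp hp1 (t := Real.exp (h * (p * (1 + δ))))
    (P := fun f => ∃ z ≠ 0, p * (1 + δ) * (z ⬝ᵥ z) ≤ ∑ e with f e = true, (v e ⬝ᵥ z) ^ 2)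
    (fun f => trace_exp_nonneg (hpsd f).1) fun f ⟨z, hz, hbad⟩ =>
      exp_le_trace_exp (hpsd f).1 hz <| by
        rw [dotProduct_sum_smul_vecMulVec_mulVec, mul_assoc]
        exact mul_le_mul_of_nonneg_left hbad hlog
  have hexpect := hmarkov.trans (sum_bernoulliWeight_mul_trace_exp_le hp hp1 hR hv hsum hlog)
  rw [← le_div_iff₀' (Real.exp_pos _), mul_div_assoc, ← Real.exp_sub, hexp] at hexpect
  refine hexpect.trans (mul_le_mul_of_nonneg_left (Real.exp_le_exp.2 ?_) (Nat.cast_nonneg _))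
  calc p * (1 + δ - 1) / R - h * (p * (1 + δ))
      = p / R * (δ - (1 + δ) * Real.log (1 + δ)) := by rw [hh]; ring
    _ ≤ p / R * -(δ ^ 2 / 3) :=
        mul_le_mul_of_nonneg_left (sub_one_add_mul_log_le_neg_sq_div_three h0 h1)
          (div_nonneg hp hR.le)
    _ = -(p * δ ^ 2 / (3 * R)) := by field_simp

theorem matrix_chernoff_rankOne_relative {Q : Matrix ι ι ℝ} (hQ : Q.PosSemidef)
    (hp : 0 ≤ p) (hp1 : p ≤ 1) (hR : 0 < R)
    (hv : ∀ e x, (v e ⬝ᵥ x) ^ 2 ≤ R * (x ⬝ᵥ (Q *ᵥ x)))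
    (hsum : ∀ x, ∑ e, (v e ⬝ᵥ x) ^ 2 ≤ x ⬝ᵥ (Q *ᵥ x)) (h0 : 0 ≤ δ) (h1 : δ ≤ 1) :
    bernoulliProb p (fun f => ∃ x, 0 < x ⬝ᵥ (Q *ᵥ x) ∧
        p * (1 + δ) * (x ⬝ᵥ (Q *ᵥ x)) ≤ ∑ e with f e = true, (v e ⬝ᵥ x) ^ 2) ≤
      Fintype.card ι * Real.exp (-(p * δ ^ 2 / (3 * R))) := by
  obtain ⟨W, S, hW, hWQW, hSS, hproj⟩ := exists_whitening hQ
  have hmove (e : E) (z : ι → ℝ) : (W *ᵥ v e) ⬝ᵥ z = v e ⬝ᵥ (W *ᵥ z) := by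
    rw [dotProduct_mulVec, ← mulVec_transpose, hW]
  have hWS (e : E) (x : ι → ℝ) : (W *ᵥ v e) ⬝ᵥ (S *ᵥ x) = v e ⬝ᵥ x := by
    have hdefect := hv e (x - W *ᵥ (S *ᵥ x))
    rw [hproj, mul_zero] at hdefect
    have := pow_eq_zero_iff two_ne_zero |>.1 (hdefect.antisymm (sq_nonneg _))
    rw [dotProduct_sub] at this
    rw [hmove]; linarith
  have hnorm (e : E) : (W *ᵥ v e) ⬝ᵥ (W *ᵥ v e) ≤ R := by
    have hsq : ((W *ᵥ v e) ⬝ᵥ (W *ᵥ v e)) ^ 2 ≤ R * ((W *ᵥ v e) ⬝ᵥ (W *ᵥ v e)) := by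
      nth_rw 1 [hmove]
      exact (hv e _).trans (mul_le_mul_of_nonneg_left (hWQW _) hR.le)
    by_contra! hlt
    nlinarith [hR.trans hlt]
  have hwhite (z : ι → ℝ) : ∑ e, ((W *ᵥ v e) ⬝ᵥ z) ^ 2 ≤ z ⬝ᵥ z := by
    simp only [hmove]
    exact (hsum _).trans (hWQW z)
  refine le_trans (bernoulliProb_mono hp hp1 fun f ⟨x, hx, hbad⟩ => ⟨S *ᵥ x, ?_, ?_⟩)
    (matrix_chernoff_rankOne hp hp1 hR hnorm hwhite h0 h1)
  · rintro hzero
    rw [← hSS, hzero, zero_dotProduct] at hx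
    exact hx.false
  · simpa only [hSS, hWS] using hbad

end MatrixChernoff

section Laplacian

variable {V : Type*}

/-- The signed indicator `𝟙ᵢ - 𝟙ⱼ` of an edge `{i, j}`, in which the orientation is chosen by
`Quot.out`; every use is through `(edgeVec e ⬝ᵥ x) ^ 2`, which does not depend on it. -/
noncomputable def edgeVec [DecidableEq V] (e : Sym2 V) : V → ℝ :=
  Pi.single (Quot.out e).1 1 - Pi.single (Quot.out e).2 1

variable [Fintype V]

theorem edgeVec_dotProduct_sq [DecidableEq V] (i j : V) (x : V → ℝ) :
    (edgeVec s(i, j) ⬝ᵥ x) ^ 2 = (x i - x j) ^ 2 := by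
  have hdot : edgeVec s(i, j) ⬝ᵥ x = x (Quot.out s(i, j)).1 - x (Quot.out s(i, j)).2 := by
    simp [edgeVec, sub_dotProduct]
  have hout : s((Quot.out s(i, j)).1, (Quot.out s(i, j)).2) = s(i, j) := Quot.out_eq _
  rw [hdot]
  rcases Sym2.eq_iff.1 hout with ⟨h1, h2⟩ | ⟨h1, h2⟩
  · rw [h1, h2]
  · rw [h1, h2, ← neg_sub, neg_sq]

variable (G : SimpleGraph V) [DecidableRel G.Adj]

theorem sum_adj_eq_two_mul_sum_edgeFinset {R : Type*} [Semiring R] (g : Sym2 V → R) :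
    ∑ i, ∑ j, (if G.Adj i j then g s(i, j) else 0) = 2 * ∑ e ∈ G.edgeFinset, g e := by
  calc ∑ i, ∑ j, (if G.Adj i j then g s(i, j) else 0)
      = ∑ q : V × V with G.Adj q.1 q.2, g s(q.1, q.2) := by
        rw [sum_filter, Fintype.sum_prod_type]
    _ = ∑ d : G.Dart, g d.edge :=
        (sum_bij' (fun d _ => d.toProd) (fun q hq => ⟨q, (mem_filter.1 hq).2⟩)
          (fun d _ => by simp) (by simp) (by simp) (by simp) fun d _ => rfl).symm
    _ = ∑ e ∈ G.edgeFinset, ∑ d : G.Dart with d.edge = e, g d.edge :=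
        (sum_fiberwise_of_maps_to (fun d _ => mem_edgeFinset.2 d.edge_mem) _).symm
    _ = ∑ e ∈ G.edgeFinset, 2 * g e := sum_congr rfl fun e he => by
        rw [sum_congr rfl fun d hd => by rw [(mem_filter.1 hd).2], sum_const,
          G.dart_edge_fiber_card e (mem_edgeFinset.1 he), two_nsmul, two_mul]
    _ = 2 * ∑ e ∈ G.edgeFinset, g e := (mul_sum _ _ _).symm

variable [DecidableEq V]

theorem dotProduct_lapMatrix_mulVec (x : V → ℝ) :
    x ⬝ᵥ (G.lapMatrix ℝ *ᵥ x) = ∑ e : {e // e ∈ G.edgeFinset}, (edgeVec e.1 ⬝ᵥ x) ^ 2 := by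
  rw [sum_coe_sort G.edgeFinset fun e => (edgeVec e ⬝ᵥ x) ^ 2, ← toLinearMap₂'_apply',
    lapMatrix_toLinearMap₂', div_eq_iff two_ne_zero, mul_comm, ← sum_adj_eq_two_mul_sum_edgeFinset]
  simp only [edgeVec_dotProduct_sq]

theorem dotProduct_lapMatrix_mulVec_sub_const (x : V → ℝ) (c : ℝ) :
    (fun i => x i - c) ⬝ᵥ (G.lapMatrix ℝ *ᵥ fun i => x i - c) = x ⬝ᵥ (G.lapMatrix ℝ *ᵥ x) := by
  simp only [← toLinearMap₂'_apply', lapMatrix_toLinearMap₂', sub_sub_sub_cancel_right]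

/-- The normalized Laplacian `D^{-1/2} L D^{-1/2}`, whose rows and columns at isolated vertices
vanish. -/
noncomputable def normalizedLapMatrix : Matrix V V ℝ :=
  Matrix.of fun i j => G.lapMatrix ℝ i j / (√(G.degree i) * √(G.degree j))

/-- The values of the Rayleigh quotient of the normalized Laplacian at the unit vectors orthogonal
to `D^{1/2}·1`, of which the second-smallest eigenvalue is the minimum. -/
def nontrivialRayleighSet : Set ℝ :=
  {r | ∃ z : V → ℝ, (∑ i, z i * √(G.degree i)) = 0 ∧ (∑ i, z i ^ 2) = 1 ∧
    r = z ⬝ᵥ (normalizedLapMatrix G *ᵥ z)}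

theorem dotProduct_normalizedLapMatrix_mulVec (z : V → ℝ) :
    z ⬝ᵥ (normalizedLapMatrix G *ᵥ z) =
      (fun i => z i / √(G.degree i)) ⬝ᵥ (G.lapMatrix ℝ *ᵥ fun i => z i / √(G.degree i)) := by
  simp only [dotProduct, mulVec, normalizedLapMatrix, of_apply, mul_sum]
  exact sum_congr rfl fun i _ => sum_congr rfl fun j _ => by ring

variable {G} {lam d : ℝ}

theorem mul_sum_degree_mul_sq_le (hdeg : ∀ i, 0 < G.degree i)
    (hlam : lam ∈ lowerBounds (nontrivialRayleighSet G)) {x : V → ℝ}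
    (hx : ∑ i, G.degree i * x i = 0) :
    lam * ∑ i, G.degree i * x i ^ 2 ≤ x ⬝ᵥ (G.lapMatrix ℝ *ᵥ x) := by
  have hform : 0 ≤ x ⬝ᵥ (G.lapMatrix ℝ *ᵥ x) := by
    simpa only [star_trivial] using (posSemidef_lapMatrix ℝ G).dotProduct_mulVec_nonneg x
  have hN : 0 ≤ ∑ i, G.degree i * x i ^ 2 := sum_nonneg fun i _ => by positivity
  set N := ∑ i, G.degree i * x i ^ 2 with hNdef
  rcases hN.eq_or_lt with hN0 | hNpos
  · rwa [← hN0, mul_zero]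
  have hsqrt (i : V) : 0 < √(G.degree i : ℝ) := Real.sqrt_pos.2 (by exact_mod_cast hdeg i)
  have hsq (i : V) : √(G.degree i : ℝ) ^ 2 = G.degree i := Real.sq_sqrt (Nat.cast_nonneg _)
  set z : V → ℝ := fun i => √(G.degree i) * ((√N)⁻¹ * x i)
  have horth : ∑ i, z i * √(G.degree i) = 0 :=
    calc ∑ i, z i * √(G.degree i) = (√N)⁻¹ * ∑ i, √(G.degree i : ℝ) ^ 2 * x i := by
          rw [mul_sum]; exact sum_congr rfl fun i _ => by ring
      _ = 0 := by simp only [hsq, hx, mul_zero]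
  have hnorm : ∑ i, z i ^ 2 = 1 :=
    calc ∑ i, z i ^ 2 = (√N ^ 2)⁻¹ * ∑ i, √(G.degree i : ℝ) ^ 2 * x i ^ 2 := by
          rw [mul_sum]; exact sum_congr rfl fun i _ => by ring
      _ = 1 := by simp only [hsq, ← hNdef, Real.sq_sqrt hN, inv_mul_cancel₀ hNpos.ne']
  have hscale : (fun i => z i / √(G.degree i)) = (√N)⁻¹ • x := by
    ext i
    rw [mul_div_cancel_left₀ _ (hsqrt i).ne', Pi.smul_apply, smul_eq_mul]
  have hquot := hlam ⟨z, horth, hnorm, rfl⟩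
  rwa [dotProduct_normalizedLapMatrix_mulVec, hscale, mulVec_smul, dotProduct_smul,
    smul_dotProduct, smul_eq_mul, smul_eq_mul, ← mul_assoc, ← mul_inv,
    Real.mul_self_sqrt hN, inv_mul_eq_div, le_div_iff₀ hNpos] at hquot

theorem sq_sub_le_mul_dotProduct_lapMatrix_mulVec (hd : 0 < d) (hdeg : ∀ i, d ≤ G.degree i)
    (hlam0 : 0 < lam) (hlam : lam ∈ lowerBounds (nontrivialRayleighSet G)) (x : V → ℝ) (i j : V) :
    (x i - x j) ^ 2 ≤ 2 / (d * lam) * (x ⬝ᵥ (G.lapMatrix ℝ *ᵥ x)) := by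
  have hdeg0 (k : V) : 0 < (G.degree k : ℝ) := hd.trans_le (hdeg k)
  rcases eq_or_ne i j with rfl | hij
  · have hform := (posSemidef_lapMatrix ℝ G).dotProduct_mulVec_nonneg x
    rw [star_trivial] at hform
    rw [sub_self, zero_pow two_ne_zero]
    positivity
  have hvol : 0 < ∑ k, (G.degree k : ℝ) := sum_pos (fun k _ => hdeg0 k) ⟨i, mem_univ i⟩
  set y : V → ℝ := fun k => x k - (∑ l, G.degree l * x l) / ∑ l, (G.degree l : ℝ)
  have hy : ∑ k, G.degree k * y k = 0 := by
    simp only [y, mul_sub, sum_sub_distrib, ← sum_mul]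
    rw [mul_div_cancel₀ _ hvol.ne', sub_self]
  have hpoincare : lam * ∑ k, G.degree k * y k ^ 2 ≤ x ⬝ᵥ (G.lapMatrix ℝ *ᵥ x) := by
    rw [← dotProduct_lapMatrix_mulVec_sub_const G x]
    exact mul_sum_degree_mul_sq_le (fun k => by exact_mod_cast hdeg0 k) hlam hy
  have hpair : d * (y i ^ 2 + y j ^ 2) ≤ ∑ k, G.degree k * y k ^ 2 :=
    calc d * (y i ^ 2 + y j ^ 2) = ∑ k ∈ {i, j}, d * y k ^ 2 := by rw [sum_pair hij, mul_add]
      _ ≤ ∑ k ∈ {i, j}, G.degree k * y k ^ 2 := by gcongr with k; exact hdeg k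
      _ ≤ ∑ k, G.degree k * y k ^ 2 :=
        sum_le_sum_of_subset_of_nonneg (subset_univ _) fun k _ _ => by positivity
  rw [div_mul_eq_mul_div, le_div_iff₀ (mul_pos hd hlam0)]
  calc (x i - x j) ^ 2 * (d * lam)
      = (y i - y j) ^ 2 * (d * lam) := by simp only [y, sub_sub_sub_cancel_right]
    _ ≤ 2 * (y i ^ 2 + y j ^ 2) * (d * lam) := by
        gcongr; linarith [sq_nonneg (y i + y j)]
    _ = 2 * (lam * (d * (y i ^ 2 + y j ^ 2))) := by ring
    _ ≤ 2 * (lam * ∑ k, G.degree k * y k ^ 2) := by gcongr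
    _ ≤ 2 * (x ⬝ᵥ (G.lapMatrix ℝ *ᵥ x)) := by gcongr

theorem edgeVec_dotProduct_sq_le (hd : 0 < d) (hdeg : ∀ i, d ≤ G.degree i)
    (hlam0 : 0 < lam) (hlam : lam ∈ lowerBounds (nontrivialRayleighSet G))
    (e : Sym2 V) (x : V → ℝ) :
    (edgeVec e ⬝ᵥ x) ^ 2 ≤ 2 / (d * lam) * (x ⬝ᵥ (G.lapMatrix ℝ *ᵥ x)) := by
  induction e with
  | h i j =>
    rw [edgeVec_dotProduct_sq]
    exact sq_sub_le_mul_dotProduct_lapMatrix_mulVec hd hdeg hlam0 hlam x i j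

theorem dotProduct_lapMatrix_mulVec_pos (hd : 0 < d) (hdeg : ∀ i, d ≤ G.degree i)
    (hlam0 : 0 < lam) (hlam : lam ∈ lowerBounds (nontrivialRayleighSet G)) {x : V → ℝ} {i j : V}
    (hx : x i ≠ x j) :
    0 < x ⬝ᵥ (G.lapMatrix ℝ *ᵥ x) :=
  (mul_pos_iff_of_pos_left (by positivity)).1 <| (sq_pos_of_ne_zero (sub_ne_zero.2 hx)).trans_le
    (sq_sub_le_mul_dotProduct_lapMatrix_mulVec hd hdeg hlam0 hlam x i j)

end Laplacian

section Certificate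

variable {V : Type*}

/-- The entry of a matrix at an unordered pair of indices, with `X` replaced by its symmetric part
to make it well defined. -/
noncomputable def symEntry (X : Matrix V V ℝ) : Sym2 V → ℝ :=
  Sym2.lift ⟨fun i j => (X i j + X j i) / 2, fun i j => by ring⟩

variable [Fintype V] (G : SimpleGraph V) [DecidableRel G.Adj]

/-- The objective `∑ b_{ij} X_{ij}` of the semidefinite relaxation, where `f` marks the edges on
which `b = -1`. -/
noncomputable def sdpObjective (f : {e // e ∈ G.edgeFinset} → Bool) (X : Matrix V V ℝ) : ℝ :=
  ∑ e ∈ G.edgeFinset.attach, (if f e then (-1 : ℝ) else 1) * symEntry X e.1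

/-- The value `|E_G| - 2 |E_H|` of the planted assignment, where `f` marks the edges of `H`. -/
noncomputable def plantedValue (f : {e // e ∈ G.edgeFinset} → Bool) : ℝ :=
  (G.edgeFinset.card : ℝ) - 2 * ((G.edgeFinset.attach.filter fun e => f e = true).card : ℝ)

/-- The semidefinite relaxation is exact: among the positive semidefinite matrices with unit
diagonal, the all-ones matrix is the only one whose objective reaches the planted value, and none
exceeds it. -/
def IsUniquelyOptimalAtOnes (f : {e // e ∈ G.edgeFinset} → Bool) : Prop :=
  ∀ X : Matrix V V ℝ, X.PosSemidef → (∀ i, X i i = 1) →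
    sdpObjective G f X ≤ plantedValue G f ∧
      (sdpObjective G f X = plantedValue G f ↔ X = Matrix.of fun _ _ => (1 : ℝ))

variable {G} {f : {e // e ∈ G.edgeFinset} → Bool}

theorem plantedValue_eq_sum :
    plantedValue G f = ∑ e ∈ G.edgeFinset.attach, (if f e then (-1 : ℝ) else 1) := by
  rw [plantedValue, ← card_attach, card_eq_sum_ones, card_filter, Nat.cast_sum, Nat.cast_sum,
    mul_sum, ← sum_sub_distrib]
  exact sum_congr rfl fun e _ => by split_ifs <;> norm_num

theorem sdpObjective_ones :
    sdpObjective G f (Matrix.of fun _ _ => (1 : ℝ)) = plantedValue G f := by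
  have hentry (e : Sym2 V) : symEntry (Matrix.of fun _ _ : V => (1 : ℝ)) e = 1 := by
    induction e with
    | h i j => norm_num [symEntry]
  simp only [sdpObjective, hentry, mul_one, plantedValue_eq_sum]

variable [DecidableEq V]

theorem one_sub_symEntry_gram (Y : Matrix V V ℝ) (hdiag : ∀ i, (Yᵀ * Y) i i = 1) (e : Sym2 V) :
    1 - symEntry (Yᵀ * Y) e = (∑ k, (edgeVec e ⬝ᵥ Y k) ^ 2) / 2 := by
  induction e with
  | h i j =>
    have hsum : ∑ k, (Y k i - Y k j) ^ 2 =
        (Yᵀ * Y) i i + (Yᵀ * Y) j j - (Yᵀ * Y) i j - (Yᵀ * Y) j i := by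
      simp only [mul_apply, transpose_apply, ← sum_add_distrib, ← sum_sub_distrib]
      exact sum_congr rfl fun k _ => by ring
    simp only [edgeVec_dotProduct_sq, hsum, hdiag, symEntry, Sym2.lift_mk]
    ring

/-- The quadratic form of the signed Laplacian `L_G - 2 L_H`, where `f` marks the edges of `H`. -/
noncomputable def signedLapForm (G : SimpleGraph V) [DecidableRel G.Adj]
    (f : {e // e ∈ G.edgeFinset} → Bool) (x : V → ℝ) : ℝ :=
  ∑ e, (if f e then (-1 : ℝ) else 1) * (edgeVec e.1 ⬝ᵥ x) ^ 2

theorem plantedValue_sub_sdpObjective_gram (Y : Matrix V V ℝ) (hdiag : ∀ i, (Yᵀ * Y) i i = 1) :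
    plantedValue G f - sdpObjective G f (Yᵀ * Y) = (∑ k, signedLapForm G f (Y k)) / 2 := by
  simp only [plantedValue_eq_sum, sdpObjective, signedLapForm, ← sum_sub_distrib]
  rw [sum_comm, sum_div]
  refine sum_congr rfl fun e _ => ?_
  rw [← mul_sum, mul_div_assoc, ← one_sub_symEntry_gram Y hdiag]
  ring

theorem signedLapForm_of_forall_eq {x : V → ℝ} (hx : ∀ i j, x i = x j) :
    signedLapForm G f x = 0 := by
  refine sum_eq_zero fun e _ => ?_
  obtain ⟨e, -⟩ := e
  induction e with
  | h i j => rw [edgeVec_dotProduct_sq, hx i j]; ring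

theorem isUniquelyOptimalAtOnes_of_signedLapForm_pos
    (hpos : ∀ (x : V → ℝ) (i j : V), x i ≠ x j → 0 < signedLapForm G f x) :
    IsUniquelyOptimalAtOnes G f := by
  intro X hX hdiag
  obtain ⟨Y, rfl⟩ : ∃ Y : Matrix V V ℝ, X = Yᵀ * Y := by
    open scoped MatrixOrder in exact CStarAlgebra.nonneg_iff_eq_star_mul_self.1 hX.nonneg
  have hgap := plantedValue_sub_sdpObjective_gram (f := f) Y hdiag
  have hnonneg (k : V) : 0 ≤ signedLapForm G f (Y k) := by
    by_cases hk : ∀ i j, Y k i = Y k j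
    · exact (signedLapForm_of_forall_eq hk).ge
    · push Not at hk
      obtain ⟨i, j, hij⟩ := hk
      exact (hpos _ i j hij).le
  have hsum : 0 ≤ ∑ k, signedLapForm G f (Y k) := sum_nonneg fun k _ => hnonneg k
  refine ⟨by linarith, fun heq => ?_, fun heq => heq ▸ sdpObjective_ones⟩
  have hzero := (sum_eq_zero_iff_of_nonneg fun k _ => hnonneg k).1
    (by linarith : ∑ k, signedLapForm G f (Y k) = 0)
  have hrow (k i j : V) : Y k i = Y k j := by
    by_contra hij
    exact (hpos _ i j hij).ne' (hzero k (mem_univ k))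
  ext i j
  rw [of_apply, ← hdiag i]
  simp only [mul_apply, hrow _ j i]

theorem signedLapForm_pos {c : ℝ} (hc : c < 1 / 2) {x : V → ℝ}
    (h : ∑ e with f e = true, (edgeVec e.1 ⬝ᵥ x) ^ 2 < c * (x ⬝ᵥ (G.lapMatrix ℝ *ᵥ x))) :
    0 < signedLapForm G f x := by
  have hform : signedLapForm G f x =
      x ⬝ᵥ (G.lapMatrix ℝ *ᵥ x) - 2 * ∑ e with f e = true, (edgeVec e.1 ⬝ᵥ x) ^ 2 := by
    rw [dotProduct_lapMatrix_mulVec, sum_filter, mul_sum, ← sum_sub_distrib]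
    exact sum_congr rfl fun e _ => by split_ifs <;> ring
  have hnonneg : 0 ≤ x ⬝ᵥ (G.lapMatrix ℝ *ᵥ x) := by
    rw [dotProduct_lapMatrix_mulVec]
    positivity
  nlinarith

end Certificate

theorem one_sub_card_mul_exp_le_bernoulliProb_isUniquelyOptimalAtOnes {V : Type*} [Fintype V]
    [DecidableEq V] {G : SimpleGraph V} [DecidableRel G.Adj] {d lam η δ : ℝ} (hd : 0 < d)
    (hdeg : ∀ i, d ≤ G.degree i) (hlam0 : 0 < lam)
    (hlam : lam ∈ lowerBounds (nontrivialRayleighSet G)) (hη0 : 0 ≤ η)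
    (hδ0 : 0 ≤ δ) (hδ1 : δ ≤ 1) (hsmall : η * (1 + δ) < 1 / 2) :
    1 - Fintype.card V * Real.exp (-(η * δ ^ 2 * (d * lam) / 6)) ≤
      bernoulliProb η (IsUniquelyOptimalAtOnes G) := by
  have hη1 : η ≤ 1 := by linarith [mul_nonneg hη0 hδ0]
  have hbad := matrix_chernoff_rankOne_relative (posSemidef_lapMatrix ℝ G) hη0 hη1
    (v := fun e : {e // e ∈ G.edgeFinset} => edgeVec e.1) (R := 2 / (d * lam)) (by positivity)
    (fun e => edgeVec_dotProduct_sq_le hd hdeg hlam0 hlam e.1)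
    (fun x => (dotProduct_lapMatrix_mulVec G x).ge) hδ0 hδ1
  have hexp : η * δ ^ 2 / (3 * (2 / (d * lam))) = η * δ ^ 2 * (d * lam) / 6 := by
    field_simp
    ring
  rw [hexp] at hbad
  refine (sub_le_sub_left hbad 1).trans (one_sub_bernoulliProb_le hη0 hη1 fun f hf => ?_)
  refine isUniquelyOptimalAtOnes_of_signedLapForm_pos fun x i j hij => ?_
  push Not at hf
  exact signedLapForm_pos hsmall (hf x (dotProduct_lapMatrix_mulVec_pos hd hdeg hlam0 hlam hij))

theorem mul_exp_neg_three_mul_log {x : ℝ} (hx : 0 < x) :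
    x * Real.exp (-(3 * Real.log x)) = 1 / x ^ 2 := by
  rw [Real.exp_neg, show 3 * Real.log x = Real.log (x ^ 3) by simp, Real.exp_log (by positivity)]
  field_simp

theorem stmt_14_general {V : Type*} [Fintype V] [DecidableEq V] [Nontrivial V]
    (G : SimpleGraph V) [DecidableRel G.Adj] {d lam η δ : ℝ} (hd : 0 < d)
    (hdeg : ∀ i, d ≤ G.degree i) (hlam : lam ∈ lowerBounds (nontrivialRayleighSet G))
    (hη : 0 < η) (hgap : 18 / η * Real.log (Fintype.card V) < d * lam)
    (hδ : δ = √(18 * Real.log (Fintype.card V) / (η * d * lam))) (hsmall : η * (1 + δ) < 1 / 2) :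
    1 - 1 / (Fintype.card V : ℝ) ^ 2 ≤ bernoulliProb η (IsUniquelyOptimalAtOnes G) := by
  have hcard : (1 : ℝ) < Fintype.card V := by exact_mod_cast Fintype.one_lt_card
  have hlog : 0 < Real.log (Fintype.card V) := Real.log_pos hcard
  have hlam0 : 0 < lam := pos_of_mul_pos_right (hgap.trans' (by positivity)) hd.le
  have hδ1 : δ ≤ 1 := by
    rw [div_mul_eq_mul_div, div_lt_iff₀' hη, ← mul_assoc] at hgap
    rw [hδ, Real.sqrt_le_one, div_le_one (by positivity)]
    exact hgap.le
  have hexp : η * δ ^ 2 * (d * lam) / 6 = 3 * Real.log (Fintype.card V) := by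
    rw [hδ, Real.sq_sqrt (by positivity)]
    field_simp
    norm_num
  rw [← mul_exp_neg_three_mul_log (zero_lt_one.trans hcard), ← hexp]
  exact one_sub_card_mul_exp_le_bernoulliProb_isUniquelyOptimalAtOnes hd hdeg
    hlam0 hlam hη.le (hδ ▸ Real.sqrt_nonneg _) hδ1 hsmall

theorem stmt_14 {n : ℕ} (hn : 2 ≤ n) (G : SimpleGraph (Fin n)) [DecidableRel G.Adj]
    (hconn : G.Connected)
    (dmin : ℕ) (hdmin : IsLeast (Set.range fun i => G.degree i) dmin) (hdmin1 : 1 ≤ dmin)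
    -- `lam` is the second-smallest eigenvalue of the normalized Laplacian
    -- `D_G^{−1/2} L_G D_G^{−1/2}`: the minimum Rayleigh quotient over unit vectors
    -- orthogonal to `D_G^{1/2}·1`, the eigenvector of the smallest eigenvalue `0`.
    (lam : ℝ)
    (hlam : IsLeast {r : ℝ | ∃ z : Fin n → ℝ,
        (∑ i, z i * Real.sqrt (G.degree i)) = 0 ∧ (∑ i, (z i) ^ 2) = 1 ∧
        r = z ⬝ᵥ ((Matrix.of fun i j =>
          (G.lapMatrix ℝ) i j / (Real.sqrt (G.degree i) * Real.sqrt (G.degree j))) *ᵥ z)} lam)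
    (η : ℝ) (hη : η ∈ Set.Ioo (0 : ℝ) (1 / 2))
    (hgap : (dmin : ℝ) * lam > (18 / η) * Real.log n)
    (δ : ℝ) (hδ : δ = Real.sqrt (18 * Real.log n / (η * dmin * lam)))
    (hsmall : η * (1 + δ) < 1 / 2) :
    -- with probability ≥ 1 − 1/n² over the random subgraph `H` (each edge of `G` kept
    -- independently with probability `η`; `f e = true` means `e ∈ E_H`, i.e. `b_e = −1`),
    -- the SDP attains its maximum `|E_G| − 2|E_H|` uniquely at the all-ones matrix
    1 - 1 / (n : ℝ) ^ 2 ≤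
      ∑ f : {e : Sym2 (Fin n) // e ∈ G.edgeFinset} → Bool,
        if (∀ X : Matrix (Fin n) (Fin n) ℝ, X.PosSemidef → (∀ i, X i i = 1) →
            (∑ e ∈ G.edgeFinset.attach, (if f e then (-1 : ℝ) else 1) * entrySym X e.1) ≤
              (G.edgeFinset.card : ℝ) -
                2 * ((G.edgeFinset.attach.filter fun e => f e = true).card : ℝ) ∧
            ((∑ e ∈ G.edgeFinset.attach, (if f e then (-1 : ℝ) else 1) * entrySym X e.1) =
              (G.edgeFinset.card : ℝ) -
                2 * ((G.edgeFinset.attach.filter fun e => f e = true).card : ℝ) ↔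
              X = Matrix.of fun _ _ => (1 : ℝ)))
        then ∏ e : {e : Sym2 (Fin n) // e ∈ G.edgeFinset}, (if f e then η else 1 - η)
        else 0 := by
  have : Nontrivial (Fin n) := Fin.nontrivial_iff_two_le.2 hn
  have hgen := stmt_14_general G (Nat.cast_pos.2 hdmin1)
    (fun i => Nat.cast_le.2 (hdmin.2 ⟨i, rfl⟩)) hlam.2 hη.1
    (by rwa [Fintype.card_fin]) (by rwa [Fintype.card_fin]) hsmall
  rwa [Fintype.card_fin] at hgen
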